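/- Let 𝒳 and 𝒲 be standard Borel spaces, R a probability measure on 𝒲, f : 𝒳 × 𝒲 → 𝒳 measurable with t-step transition maps F_t, and P_* a nominal invariant state distribution ((P_* × R) ∘ f⁻¹ = P_*). Let Φ ≪ P_* be a probability measure on 𝒳 and κ a Markov kernel from 𝒳 to 𝒲^t with κ(x) ≪ R^{⊗t} for Φ-almost every x. Set μ := Φ ⊗ κ, ν := P_* × R^{⊗t}, and P_t := μ ∘ F_t⁻¹. Let θ and θ_* be the disintegration (conditional distribution) kernels of the pushforwards of μ and ν, respectively, under the map y ↦ (F_t(y), y) from 𝒳 × 𝒲^t to 𝒳 × (𝒳 × 𝒲^t), i.e. the conditional laws of the state-noise sequence given the terminal state. Then the conditional relative entropy balance equation holds in [0,∞]: ∫_𝒳 D(κ(x) ‖ R^{⊗t}) dΦ(x) + D(Φ ‖ P_*) = D(P_t ‖ P_*) + ∫_𝒳 D(θ(z) ‖ θ_*(z)) dP_t(z). -/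

import Mathlib

open MeasureTheory ProbabilityTheory
open scoped ENNReal ProbabilityTheory Classical

/-- Kullback-Leibler divergence `D(P ‖ Q)`, valued in `[0,∞]`.  For probability measures with
`P ≪ Q` it equals `∫ log (dP/dQ) dP`, computed here in the equivalent nonnegative form
`∫⁻ (φ log φ - φ + 1) dQ` where `φ = dP/dQ`; it is `∞` when `¬ P ≪ Q`. -/
noncomputable def klDiv {α : Type*} [MeasurableSpace α] (P Q : Measure α) : ℝ≥0∞ :=
  if P ≪ Q then
    ∫⁻ x, ENNReal.ofReal ((P.rnDeriv Q x).toReal * Real.log (P.rnDeriv Q x).toReal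
      - (P.rnDeriv Q x).toReal + 1) ∂Q
  else ∞

/-- The `t`-step state transition maps: `F 0 (x, _) = x` and
`F (k+1) (x, w₀, …, w_k) = f (F k (x, w₀, …, w_{k-1}), w_k)`. -/
def stateTrans {𝒳 𝒲 : Type*} (f : 𝒳 × 𝒲 → 𝒳) : (t : ℕ) → 𝒳 × (Fin t → 𝒲) → 𝒳
  | 0, p => p.1
  | t + 1, p => f (stateTrans f t (p.1, fun i => p.2 i.castSucc), p.2 (Fin.last t))

/-- The frozen divergence agrees with Mathlib's one for finite measures. -/
lemma klDiv_eq_mathlib {α : Type*} [MeasurableSpace α] (P Q : Measure α)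
    [IsFiniteMeasure P] [IsFiniteMeasure Q] : klDiv P Q = InformationTheory.klDiv P Q := by
  rw [InformationTheory.klDiv_eq_lintegral_klFun, klDiv]
  simp only [InformationTheory.klFun_apply]
  congr 1
  refine lintegral_congr fun x => ?_
  congr 1
  ring

/-- Conditional divergence in integral form. -/
lemma klDiv_compProd_right_aux {α β : Type*} [MeasurableSpace α] [MeasurableSpace β]
    [MeasurableSpace.CountableOrCountablyGenerated α β]
    (μ : Measure α) [IsFiniteMeasure μ] (κ η : Kernel α β) [IsMarkovKernel κ] [IsMarkovKernel η]
    (h : ∀ᵐ x ∂μ, κ x ≪ η x) :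
    InformationTheory.klDiv (μ ⊗ₘ κ) (μ ⊗ₘ η)
      = ∫⁻ x, InformationTheory.klDiv (κ x) (η x) ∂μ := by
  have hac : μ ⊗ₘ κ ≪ μ ⊗ₘ η := Measure.absolutelyContinuous_compProd_right_iff.mpr h
  have hm : Measurable (fun p : α × β => Kernel.rnDeriv κ η p.1 p.2) := Kernel.measurable_rnDeriv κ η
  have heq : μ ⊗ₘ κ = (μ ⊗ₘ η).withDensity (fun p => Kernel.rnDeriv κ η p.1 p.2) := by
    rw [← Measure.compProd_withDensity hm]
    refine Measure.compProd_congr ?_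
    filter_upwards [h] with x hx
    exact (Kernel.withDensity_rnDeriv_eq hx).symm
  have hrn : (μ ⊗ₘ κ).rnDeriv (μ ⊗ₘ η) =ᵐ[μ ⊗ₘ η] fun p => Kernel.rnDeriv κ η p.1 p.2 := by
    conv_lhs => rw [heq]
    exact Measure.rnDeriv_withDensity _ hm
  rw [InformationTheory.klDiv_eq_lintegral_klFun_of_ac hac]
  have h1 : ∫⁻ p, ENNReal.ofReal (InformationTheory.klFun ((μ ⊗ₘ κ).rnDeriv (μ ⊗ₘ η) p).toReal)
        ∂(μ ⊗ₘ η)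
      = ∫⁻ p, ENNReal.ofReal (InformationTheory.klFun (Kernel.rnDeriv κ η p.1 p.2).toReal)
        ∂(μ ⊗ₘ η) := by
    refine lintegral_congr_ae ?_
    filter_upwards [hrn] with p hp
    rw [hp]
  have hm2 : Measurable (fun p : α × β =>
      ENNReal.ofReal (InformationTheory.klFun (Kernel.rnDeriv κ η p.1 p.2).toReal)) :=
    (InformationTheory.measurable_klFun.comp hm.ennreal_toReal).ennreal_ofReal
  rw [h1, Measure.lintegral_compProd hm2]
  refine lintegral_congr_ae ?_
  filter_upwards [h] with x hx
  rw [InformationTheory.klDiv_eq_lintegral_klFun_of_ac hx]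
  refine lintegral_congr_ae ?_
  filter_upwards [Kernel.rnDeriv_eq_rnDeriv_measure (κ := κ) (η := η) (a := x)] with y hy
  rw [hy]

/-- Chain rule, integral form. -/
lemma klDiv_chain_aux {α β : Type*} [MeasurableSpace α] [MeasurableSpace β]
    [MeasurableSpace.CountableOrCountablyGenerated α β]
    (μ ν : Measure α) [IsFiniteMeasure μ] [IsFiniteMeasure ν]
    (κ η : Kernel α β) [IsMarkovKernel κ] [IsMarkovKernel η]
    (h : ∀ᵐ x ∂μ, κ x ≪ η x) :
    InformationTheory.klDiv (μ ⊗ₘ κ) (ν ⊗ₘ η)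
      = klDiv μ ν + ∫⁻ x, klDiv (κ x) (η x) ∂μ := by
  rw [InformationTheory.klDiv_compProd_eq_add, klDiv_compProd_right_aux μ κ η h, klDiv_eq_mathlib]
  congr 1
  exact lintegral_congr fun x => (klDiv_eq_mathlib _ _).symm

lemma measurable_stateTrans {𝒳 𝒲 : Type*} [MeasurableSpace 𝒳] [MeasurableSpace 𝒲]
    (f : 𝒳 × 𝒲 → 𝒳) (hf : Measurable f) (t : ℕ) : Measurable (stateTrans f t) := by
  induction t with
  | zero => exact measurable_fst
  | succ t ih =>
    refine hf.comp (Measurable.prodMk (ih.comp ?_) ?_)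
    · fun_prop
    · fun_prop

/-- Invariance iterates to the `t`-step map. -/
lemma map_stateTrans_invariant {𝒳 𝒲 : Type*} [MeasurableSpace 𝒳] [MeasurableSpace 𝒲]
    (R : Measure 𝒲) [IsProbabilityMeasure R] (f : 𝒳 × 𝒲 → 𝒳) (hf : Measurable f)
    (P : Measure 𝒳) [IsProbabilityMeasure P] (hinv : (P.prod R).map f = P) (t : ℕ) :
    MeasurePreserving (stateTrans f t) (P.prod (Measure.pi fun _ : Fin t => R)) P := by
  induction t with
  | zero => exact measurePreserving_fst
  | succ t ih =>
    have e1 := measurePreserving_piFinSuccAbove (fun _ : Fin (t + 1) => R) (Fin.last t)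
    have e2 := (Measure.measurePreserving_swap (μ := R)
      (ν := Measure.pi fun _ : Fin t => R)).comp e1
    have e3 := (MeasurePreserving.id P).prod e2
    have e4 := (measurePreserving_prodAssoc P (Measure.pi fun _ : Fin t => R) R).symm
    have e5 := ih.prod (MeasurePreserving.id R)
    have e6 : MeasurePreserving f (P.prod R) P := ⟨hf, hinv⟩
    have key := e6.comp (e5.comp (e4.comp e3))
    convert key using 1
    funext p
    obtain ⟨x, w⟩ := p
    simp [stateTrans, MeasurableEquiv.prodAssoc, MeasurableEquiv.piFinSuccAbove,
      Fin.insertNthEquiv]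
    rfl

lemma klDiv_map_graph {α β : Type*} [MeasurableSpace α] [MeasurableSpace β]
    (μ ν : Measure α) [IsFiniteMeasure μ] [IsFiniteMeasure ν] (g : α → β) (hg : Measurable g) :
    InformationTheory.klDiv (μ.map fun y => (g y, y)) (ν.map fun y => (g y, y))
      = InformationTheory.klDiv μ ν := by
  have hG : Measurable fun y => (g y, y) := hg.prodMk measurable_id
  refine le_antisymm (InformationTheory.klDiv_map_le μ ν hG) ?_
  have h := InformationTheory.klDiv_map_le (μ.map fun y => (g y, y)) (ν.map fun y => (g y, y))
    measurable_snd
  rw [Measure.map_map measurable_snd hG, Measure.map_map measurable_snd hG] at h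
  have hid : (Prod.snd ∘ fun y => (g y, y)) = (id : α → α) := rfl
  simpa only [hid, Measure.map_id] using h

/-- Conditional relative entropy balance equation:
`∫ D(κ(x) ‖ R^{⊗t}) dΦ(x) + D(Φ ‖ P_*) = D(P_t ‖ P_*) + ∫ D(θ(z) ‖ θ_*(z)) dP_t(z)`,
where `θ` and `θ_*` are the disintegration kernels (conditional laws of the state-noise
sequence given the terminal state) of the pushforwards of `μ = Φ ⊗ κ` and
`ν = P_* × R^{⊗t}` under `y ↦ (F_t y, y)`. -/
theorem relative_entropy_balance
    {𝒳 𝒲 : Type*} [MeasurableSpace 𝒳] [StandardBorelSpace 𝒳]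
    [MeasurableSpace 𝒲] [StandardBorelSpace 𝒲]
    (R : Measure 𝒲) [IsProbabilityMeasure R]
    (f : 𝒳 × 𝒲 → 𝒳) (hf : Measurable f)
    (Pstar : Measure 𝒳) [IsProbabilityMeasure Pstar]
    (hinv : (Pstar.prod R).map f = Pstar)
    (t : ℕ)
    (Φ : Measure 𝒳) [IsProbabilityMeasure Φ] (hΦ : Φ ≪ Pstar)
    (κ : Kernel 𝒳 (Fin t → 𝒲)) [IsMarkovKernel κ]
    (hκ : ∀ᵐ x ∂Φ, κ x ≪ Measure.pi fun _ => R)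
    (θ θstar : Kernel 𝒳 (𝒳 × (Fin t → 𝒲))) [IsMarkovKernel θ] [IsMarkovKernel θstar]
    (hθ : (((Φ ⊗ₘ κ).map fun y => (stateTrans f t y, y)).fst ⊗ₘ θ)
        = (Φ ⊗ₘ κ).map fun y => (stateTrans f t y, y))
    (hθstar : (((Pstar.prod (Measure.pi fun _ => R)).map fun y => (stateTrans f t y, y)).fst
          ⊗ₘ θstar)
        = (Pstar.prod (Measure.pi fun _ => R)).map fun y => (stateTrans f t y, y)) :
    (∫⁻ x, klDiv (κ x) (Measure.pi fun _ => R) ∂Φ) + klDiv Φ Pstar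
      = klDiv ((Φ ⊗ₘ κ).map (stateTrans f t)) Pstar
        + ∫⁻ z, klDiv (θ z) (θstar z) ∂((Φ ⊗ₘ κ).map (stateTrans f t)) := by
  have hF := measurable_stateTrans f hf t
  have hG : Measurable fun y => (stateTrans f t y, y) := hF.prodMk measurable_id
  have hfst : ∀ m : Measure (𝒳 × (Fin t → 𝒲)),
      (m.map fun y => (stateTrans f t y, y)).fst = m.map (stateTrans f t) := fun m => by
    rw [Measure.fst, Measure.map_map measurable_fst hG]
    rfl
  rw [hfst] at hθ hθstar
  rw [(map_stateTrans_invariant R f hf Pstar hinv t).map_eq] at hθstar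
  have : IsProbabilityMeasure ((Φ ⊗ₘ κ).map (stateTrans f t)) :=
    Measure.isProbabilityMeasure_map hF.aemeasurable
  have hac : Φ ⊗ₘ κ ≪ Pstar.prod (Measure.pi fun _ => R) := by
    rw [← Measure.compProd_const]
    exact hΦ.compProd hκ
  have hac2 := hac.map hG
  rw [← hθ, ← hθstar] at hac2
  have hL := klDiv_chain_aux Φ Pstar κ (Kernel.const 𝒳 (Measure.pi fun _ : Fin t => R))
    (by simpa using hκ)
  have hR := klDiv_chain_aux ((Φ ⊗ₘ κ).map (stateTrans f t)) Pstar θ θstar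
    hac2.kernel_of_compProd
  rw [hθ, hθstar, klDiv_map_graph _ _ _ hF] at hR
  rw [Measure.compProd_const, hR] at hL
  simp only [Kernel.const_apply] at hL
  rw [add_comm, ← hL]
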